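/- Let U be a nonzero proper subspace of V, let G = s(V,b)^{(1)}, l = codim_V U, r = dim(U ∩ U^⊥), and t = codim_G N_G(U). Then l + t > n except in the following cases: (a) if l = 1 and r = 0 (i.e. U ∩ U^⊥ = 0), then l + t = n; (b) if l = 1 and r = 1 (i.e. U^⊥ is isotropic), then l + t = n − 1; (c) if l = 2, n = 3, and r = 1 (i.e. U is isotropic), then l + t = n; (d) if l = 2, n = 5, and r = 2, then l + t = n; (e) if l = 2, n = 4, and r = 2 (i.e. U is totally isotropic), then l + t = n − 1; (f) if l = 3, n = 6, and r = 3 (i.e. U is totally isotropic), then l + t = n. -/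

import Mathlib

open Module

/-- The orthogonal complement of a subspace `L` with respect to a bilinear form `b`:
`L^⊥ = {v ∈ V | b(v,w) = 0 for all w ∈ L}`. -/
def perp {K V : Type*} [Field K] [AddCommGroup V] [Module K V]
    (B : V →ₗ[K] V →ₗ[K] K) (L : Submodule K V) : Submodule K V where
  carrier := {v | ∀ w ∈ L, B v w = 0}
  add_mem' := by
    intro a b ha hb w hw
    simp [map_add, LinearMap.add_apply, ha w hw, hb w hw]
  zero_mem' := by
    intro w hw
    simp
  smul_mem' := by
    intro c a ha w hw
    simp [map_smul, LinearMap.smul_apply, ha w hw]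

/-- The Lie algebra `s(V,b)` of endomorphisms preserving the bilinear form `b`
(in characteristic 2, self-adjoint endomorphisms), as a subspace of `End K V`. -/
def sAdj {K V : Type*} [Field K] [AddCommGroup V] [Module K V]
    (B : V →ₗ[K] V →ₗ[K] K) : Submodule K (Module.End K V) where
  carrier := {A | ∀ u v : V, B (A u) v = B u (A v)}
  add_mem' := by
    intro A C hA hC u v
    simp [LinearMap.add_apply, map_add, hA u v, hC u v]
  zero_mem' := by
    intro u v
    simp
  smul_mem' := by
    intro c A hA u v
    simp [LinearMap.smul_apply, map_smul, hA u v]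

/-- The derived subalgebra `s(V,b)⁽¹⁾ = [s(V,b), s(V,b)]`, spanned by
commutators of elements of `s(V,b)`. -/
def sAdjDerived {K V : Type*} [Field K] [AddCommGroup V] [Module K V]
    (B : V →ₗ[K] V →ₗ[K] K) : Submodule K (Module.End K V) :=
  Submodule.span K
    {C : Module.End K V | ∃ A₁ ∈ sAdj B, ∃ A₂ ∈ sAdj B, C = A₁ * A₂ - A₂ * A₁}

/-- Endomorphisms of V leaving the subspace U stable. -/
def stab {K V : Type*} [Field K] [AddCommGroup V] [Module K V]
    (U : Submodule K V) : Submodule K (Module.End K V) where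
  carrier := {A | ∀ u ∈ U, A u ∈ U}
  add_mem' := by
    intro A C hA hC u hu
    simpa [LinearMap.add_apply] using U.add_mem (hA u hu) (hC u hu)
  zero_mem' := by
    intro u hu
    simp
  smul_mem' := by
    intro c A hA u hu
    simpa [LinearMap.smul_apply] using U.smul_mem c (hA u hu)

/-!
Under `A ↦ b(A·, ·)` the space `G = s(V, b)⁽¹⁾` becomes the space of all alternating forms on `V`:
it is spanned by the operators `b(u, ·) v - b(v, ·) u`, which are combinations of commutators of
self-adjoint operators of rank one. Since `(U^⊥)^⊥ = U`, the stabilizer of `U` in `G` is the kernel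
of the restriction of `b(A·, ·)` to `U × U^⊥`. A bilinear form on `U × U^⊥` comes from an
alternating form on `V` exactly when it is alternating on `U ∩ U^⊥`, which imposes `r(r + 1)/2`
linear conditions. Therefore `t = (n - l) l - r(r + 1)/2`, where `r ≤ l` and `r ≤ n - l`. For
`l ≥ 4` this exceeds `n - l`, and for `l ≤ 3` only the exceptional values of `(l, r, n)` do not.
-/

theorem succ_choose_two_mul_two (r : ℕ) : (r + 1).choose 2 * 2 = r * (r + 1) := by
  rw [← Nat.add_one_mul_choose_eq, Nat.choose_one_right, mul_comm]

theorem choose_two_add_succ_choose_two (r : ℕ) : r.choose 2 + (r + 1).choose 2 = r * r := by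
  have hsucc := succ_choose_two_mul_two r
  rw [Nat.choose_succ_succ', Nat.choose_one_right] at hsucc ⊢
  linarith

theorem lt_of_add_succ_choose_two_eq_mul {m l r t : ℕ} (hm : 0 < m) (hl : 4 ≤ l) (hrl : r ≤ l)
    (hrm : r ≤ m) (ht : t + (r + 1).choose 2 = m * l) : m < t := by
  have htriangle := succ_choose_two_mul_two r
  have hbound : r * (r + 1) ≤ m * (l + 1) := by gcongr
  nlinarith

section AlternatingForms

variable {R M : Type*} [CommRing R] [AddCommGroup M] [Module R M]

variable (R M) in
/-- The space of alternating bilinear forms, as a submodule of the space of bilinear forms. -/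
def alternatingForms : Submodule R (LinearMap.BilinForm R M) where
  carrier := {γ | γ.IsAlt}
  add_mem' hβ hγ := hβ.add hγ
  zero_mem' := LinearMap.BilinForm.isAlt_zero
  smul_mem' c _ hγ := hγ.smul c

/-- The antisymmetrization `τ(x, y) - τ(y, x)` of a bilinear form `τ`. -/
def antisymmetrize : LinearMap.BilinForm R M →ₗ[R] alternatingForms R M where
  toFun τ := ⟨τ - τ.flip, fun x => sub_self (τ x x)⟩
  map_add' σ τ := Subtype.ext (add_sub_add_comm σ τ σ.flip τ.flip)
  map_smul' c τ := Subtype.ext (smul_sub c τ τ.flip).symm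

theorem antisymmetrize_apply (τ : LinearMap.BilinForm R M) (x y : M) :
    (antisymmetrize τ : LinearMap.BilinForm R M) x y = τ x y - τ y x :=
  rfl

variable {ι : Type*} [LinearOrder ι] (e : Basis ι R M)

/-- The entries `γ(eᵢ, eⱼ)`, `i < j`, of an alternating form `γ` in the basis `e`, listed by
columns. -/
noncomputable def upperEntries : alternatingForms R M →ₗ[R] ((j : ι) → Set.Iio j → R) where
  toFun γ j i := γ.1 (e i) (e j)
  map_add' _ _ := rfl
  map_smul' _ _ := rfl

theorem upperEntries_injective : Function.Injective (upperEntries e) := by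
  intro γ δ h
  have eq_of_lt {i j : ι} (hij : i < j) : γ.1 (e i) (e j) = δ.1 (e i) (e j) :=
    congrFun (congrFun h j) ⟨i, hij⟩
  refine Subtype.ext (e.ext fun i => e.ext fun j => ?_)
  rcases lt_trichotomy i j with hij | rfl | hji
  · exact eq_of_lt hij
  · rw [γ.2, δ.2]
  · rw [← LinearMap.BilinForm.IsAlt.neg_eq γ.2, ← LinearMap.BilinForm.IsAlt.neg_eq δ.2,
      eq_of_lt hji]

theorem upperEntries_comp_antisymmetrize_surjective :
    Function.Surjective (upperEntries e ∘ antisymmetrize) := by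
  intro c
  let τ : LinearMap.BilinForm R M :=
    e.constr R fun i => e.constr R fun j => if h : i < j then c j ⟨i, h⟩ else 0
  refine ⟨τ, funext fun j => funext fun ⟨i, hij⟩ => ?_⟩
  have hij : i < j := hij
  change (antisymmetrize τ).1 (e i) (e j) = c j ⟨i, hij⟩
  simp [antisymmetrize_apply, τ, Basis.constr_basis, hij, hij.not_gt]

theorem antisymmetrize_surjective [Module.Free R M] :
    Function.Surjective (antisymmetrize : _ →ₗ[R] alternatingForms R M) := by
  let e := Module.Free.chooseBasis R M
  let : LinearOrder (Module.Free.ChooseBasisIndex R M) := IsWellOrder.linearOrder WellOrderingRel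
  intro γ
  obtain ⟨τ, hτ⟩ := upperEntries_comp_antisymmetrize_surjective e (upperEntries e γ)
  exact ⟨τ, upperEntries_injective e hτ⟩

theorem finrank_alternatingForms [Nontrivial R] [Module.Free R M] [Module.Finite R M] :
    finrank R (alternatingForms R M) = (finrank R M).choose 2 := by
  let e := Module.finBasis R M
  have hsurj : Function.Surjective (upperEntries e) :=
    .of_comp (upperEntries_comp_antisymmetrize_surjective e)
  rw [(LinearEquiv.ofBijective _ ⟨upperEntries_injective e, hsurj⟩).finrank_eq,
    Module.finrank_pi_fintype]
  simp only [Module.finrank_fintype_fun_eq_card, Fintype.card_Iio, Fin.card_Iio]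
  rw [Fin.sum_univ_eq_sum_range (fun i => i), Finset.sum_range_id, Nat.choose_two_right]

end AlternatingForms

section Restriction

variable {R M M' N N' : Type*} [CommRing R] [AddCommGroup M] [Module R M] [AddCommGroup M']
  [Module R M'] [AddCommGroup N] [Module R N] [AddCommGroup N'] [Module R N']

/-- Pullback of bilinear maps along `f` and `g`, as a linear map:
`LinearMap.compl₁₂` bundled in its first argument. -/
def bilinPullback (f : M →ₗ[R] M') (g : N →ₗ[R] N') :
    (M' →ₗ[R] N' →ₗ[R] R) →ₗ[R] (M →ₗ[R] N →ₗ[R] R) where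
  toFun β := β.compl₁₂ f g
  map_add' _ _ := rfl
  map_smul' _ _ := rfl

theorem bilinPullback_apply (f : M →ₗ[R] M') (g : N →ₗ[R] N') (β : M' →ₗ[R] N' →ₗ[R] R)
    (x : M) (y : N) : bilinPullback f g β x y = β (f x) (g y) :=
  rfl

theorem bilinPullback_surjective {f : M →ₗ[R] M'} {g : N →ₗ[R] N'} {f' : M' →ₗ[R] M}
    {g' : N' →ₗ[R] N} (hf : f' ∘ₗ f = LinearMap.id) (hg : g' ∘ₗ g = LinearMap.id) :
    Function.Surjective (bilinPullback f g) := fun β =>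
  ⟨bilinPullback f' g' β, LinearMap.ext₂ fun x y => by
    simpa only [bilinPullback_apply, LinearMap.comp_apply, LinearMap.id_apply] using
      congr_arg₂ (fun x y => β x y) (LinearMap.congr_fun hf x) (LinearMap.congr_fun hg y)⟩

end Restriction

section VectorSpace

variable {K V W : Type*} [Field K] [AddCommGroup V] [Module K V] [AddCommGroup W] [Module K W]

theorem finrank_comap_add_finrank_of_surjective [FiniteDimensional K V] [FiniteDimensional K W]
    {f : V →ₗ[K] W} (hf : Function.Surjective f) (S : Submodule K W) :
    finrank K (S.comap f) + finrank K W = finrank K V + finrank K S := by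
  have hrange : LinearMap.range (S.mkQ ∘ₗ f) = ⊤ :=
    LinearMap.range_eq_top.2 (S.mkQ_surjective.comp hf)
  have hrank := (S.mkQ ∘ₗ f).finrank_range_add_finrank_ker
  rw [hrange, finrank_top, LinearMap.ker_comp, Submodule.ker_mkQ] at hrank
  have hquot := S.finrank_quotient_add_finrank
  omega

theorem finrank_map_add_finrank_inf_ker [FiniteDimensional K V] (f : V →ₗ[K] W)
    (S : Submodule K V) :
    finrank K (S.map f) + finrank K ↥(S ⊓ LinearMap.ker f) = finrank K S := by
  rw [← (f.domRestrict S).finrank_range_add_finrank_ker, LinearMap.range_domRestrict,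
    LinearMap.ker_domRestrict, ← Submodule.finrank_map_subtype_eq S, Submodule.map_comap_subtype]

theorem exists_projection_mapsTo (U W : Submodule K V) :
    ∃ P : V →ₗ[K] U, (∀ u : U, P u = u) ∧ ∀ w ∈ W, (P w : V) ∈ W := by
  obtain ⟨C, hdisj, hsup⟩ := IsModularLattice.exists_disjoint_and_sup_eq (inf_le_right : U ⊓ W ≤ W)
  have hCW : C ≤ W := hsup ▸ le_sup_right
  have hCU : Disjoint C U := disjoint_iff_inf_le.2 fun x ⟨hxC, hxU⟩ =>
    hdisj.le_bot ⟨⟨hxU, hCW hxC⟩, hxC⟩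
  obtain ⟨D, hCD, hD⟩ := hCU.exists_isCompl
  refine ⟨U.projectionOnto D hD.symm, Submodule.projectionOnto_apply_left hD.symm, fun w hw => ?_⟩
  obtain ⟨x, hx, c, hc, rfl⟩ := Submodule.mem_sup.1 (hsup.ge hw)
  rw [map_add, Submodule.projectionOnto_apply_of_mem_left hD.symm hx.1,
    Submodule.projectionOnto_apply_of_mem_right hD.symm (hCD hc), add_zero]
  exact hx.2

/-- Restriction to the common subspace `U ⊓ W` of bilinear maps on `U × W`. -/
def restrictInf (U W : Submodule K V) :
    (U →ₗ[K] W →ₗ[K] K) →ₗ[K] LinearMap.BilinForm K ↥(U ⊓ W) :=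
  bilinPullback (Submodule.inclusion inf_le_left) (Submodule.inclusion inf_le_right)

theorem restrictInf_surjective (U W : Submodule K V) : Function.Surjective (restrictInf U W) := by
  obtain ⟨p, hp⟩ := (Submodule.inclusion (inf_le_left : U ⊓ W ≤ U)).exists_leftInverse_of_injective
    (LinearMap.ker_eq_bot.2 (Submodule.inclusion_injective _))
  obtain ⟨q, hq⟩ := (Submodule.inclusion (inf_le_right : U ⊓ W ≤ W)).exists_leftInverse_of_injective
    (LinearMap.ker_eq_bot.2 (Submodule.inclusion_injective _))
  exact bilinPullback_surjective hp hq

theorem exists_isAlt_extension {U W : Submodule K V} {β : U →ₗ[K] W →ₗ[K] K}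
    (hβ : (restrictInf U W β).IsAlt) :
    ∃ γ : LinearMap.BilinForm K V, γ.IsAlt ∧ bilinPullback U.subtype W.subtype γ = β := by
  obtain ⟨P, hPU, hPW⟩ := exists_projection_mapsTo U W
  obtain ⟨Q, hQW, hQU⟩ := exists_projection_mapsTo W U
  -- On `U × W`, `δ` equals `β` and `δ.flip` equals `ρ.flip = -ρ`, so `δ - δ.flip - ρ` extends `β`.
  let π : V →ₗ[K] ↥(U ⊓ W) :=
    (U.subtype ∘ₗ P ∘ₗ W.subtype ∘ₗ Q).codRestrict _ fun x => ⟨(P (Q x)).2, hPW _ (Q x).2⟩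
  let δ : LinearMap.BilinForm K V := bilinPullback P Q β
  let ρ : LinearMap.BilinForm K V := bilinPullback π π (restrictInf U W β)
  have hρ : ρ.IsAlt := fun x => hβ (π x)
  refine ⟨δ - δ.flip - ρ, fun x => ?_, LinearMap.ext₂ fun x y => ?_⟩
  · simp [hρ.self_eq_zero x]
  · have hδ : δ x y = β x y := congr_arg₂ (fun u w => β u w) (hPU x) (hQW y)
    have hδρ : δ y x = ρ y x := by
      have hπx : Submodule.inclusion inf_le_right (π x) = Q x :=
        Subtype.ext (congrArg (fun u : U => (u : V)) (hPU ⟨Q x, hQU x x.2⟩))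
      have hπy : Submodule.inclusion inf_le_left (π y) = P y :=
        Subtype.ext (congrArg (fun w : W => (P w : V)) (hQW y))
      exact congr_arg₂ (fun u w => β u w) hπy.symm hπx.symm
    calc δ x y - δ y x - ρ x y = β x y - ρ y x - ρ x y := by rw [hδ, hδρ]
      _ = β x y := by rw [← hρ.neg_eq x y]; ring

theorem map_bilinPullback_alternatingForms (U W : Submodule K V) :
    (alternatingForms K V).map (bilinPullback U.subtype W.subtype) =
      (alternatingForms K ↥(U ⊓ W)).comap (restrictInf U W) := by
  ext β
  constructor
  · rintro ⟨γ, hγ, rfl⟩ x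
    exact hγ x
  · intro hβ
    obtain ⟨γ, hγ, rfl⟩ := exists_isAlt_extension hβ
    exact ⟨γ, hγ, rfl⟩

theorem finrank_map_bilinPullback_alternatingForms [FiniteDimensional K V] (U W : Submodule K V) :
    finrank K ((alternatingForms K V).map (bilinPullback U.subtype W.subtype)) +
      (finrank K ↥(U ⊓ W) + 1).choose 2 = finrank K U * finrank K W := by
  set r := finrank K ↥(U ⊓ W) with hr
  have hcomap := finrank_comap_add_finrank_of_surjective
    (V := U →ₗ[K] W →ₗ[K] K) (W := LinearMap.BilinForm K ↥(U ⊓ W))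
    (restrictInf_surjective U W) (alternatingForms K ↥(U ⊓ W))
  rw [← map_bilinPullback_alternatingForms, finrank_alternatingForms, ← hr] at hcomap
  simp only [Module.finrank_linearMap, Module.finrank_self, mul_one, ← hr] at hcomap
  have hchoose := choose_two_add_succ_choose_two r
  omega

end VectorSpace

section SelfAdjoint

variable {K V : Type*} [Field K] [AddCommGroup V] [Module K V] {B : LinearMap.BilinForm K V}

/-- The operator `x ↦ b(u, x) v - b(v, x) u`, which corresponds to the bivector `u ∧ v` when `b`
identifies `V` with its dual. -/
def wedge (B : LinearMap.BilinForm K V) (u v : V) : Module.End K V :=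
  (B u).smulRight v - (B v).smulRight u

theorem wedge_add_right (u v w : V) : wedge B u (v + w) = wedge B u v + wedge B u w := by
  ext x
  simp only [wedge, map_add, LinearMap.add_apply, LinearMap.sub_apply, LinearMap.smulRight_apply]
  module

theorem smulRight_self_mem_sAdj (hB : B.IsSymm) (u : V) :
    (B u).smulRight u ∈ sAdj B := fun x y => by
  simp [hB.eq x u, mul_comm]

theorem commutator_smulRight_self (hB : B.IsSymm) (u v : V) :
    ((B v).smulRight v : Module.End K V) * (B u).smulRight u -
      (B u).smulRight u * (B v).smulRight v = B u v • wedge B u v := by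
  ext x
  simp only [wedge, LinearMap.sub_apply, Module.End.mul_apply, LinearMap.smul_apply,
    LinearMap.smulRight_apply, map_smul, hB.eq v u]
  module

theorem wedge_mem_sAdjDerived_of_ne_zero (hB : B.IsSymm) {u v : V} (huv : B u v ≠ 0) :
    wedge B u v ∈ sAdjDerived B := by
  rw [← inv_smul_smul₀ huv (wedge B u v), ← commutator_smulRight_self hB]
  exact Submodule.smul_mem _ _ (Submodule.subset_span
    ⟨_, smulRight_self_mem_sAdj hB v, _, smulRight_self_mem_sAdj hB u, rfl⟩)

theorem wedge_mem_sAdjDerived (hB : B.IsSymm) (hnd : B.Nondegenerate) (u v : V) :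
    wedge B u v ∈ sAdjDerived B := by
  by_cases huv : B u v = 0
  · rcases eq_or_ne u 0 with rfl | hu
    · simp [wedge]
    · obtain ⟨w, hw⟩ : ∃ w, B u w ≠ 0 := by
        by_contra! hu0
        exact hu (hnd.1 u hu0)
      rw [← add_sub_cancel_right (wedge B u v) (wedge B u w), ← wedge_add_right]
      exact sub_mem (wedge_mem_sAdjDerived_of_ne_zero hB (by rwa [map_add, huv, zero_add]))
        (wedge_mem_sAdjDerived_of_ne_zero hB hw)
  · exact wedge_mem_sAdjDerived_of_ne_zero hB huv

theorem isAlt_comp_of_mem_sAdjDerived (hB : B.IsSymm) {A : Module.End K V}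
    (hA : A ∈ sAdjDerived B) : (B ∘ₗ A : LinearMap.BilinForm K V).IsAlt := by
  suffices sAdjDerived B ≤ (alternatingForms K V).comap (LinearMap.compRight K B) from this hA
  refine Submodule.span_le.2 ?_
  rintro _ ⟨A₁, h₁, A₂, h₂, rfl⟩ x
  calc B (A₁ (A₂ x) - A₂ (A₁ x)) x = B (A₁ (A₂ x)) x - B (A₂ (A₁ x)) x := by
        rw [map_sub, LinearMap.sub_apply]
    _ = B (A₂ x) (A₁ x) - B (A₁ x) (A₂ x) := by rw [h₁ (A₂ x) x, h₂ (A₁ x) x]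
    _ = 0 := by rw [hB.eq, sub_self]

theorem antisymmetrize_smulRight (u v : V) :
    (antisymmetrize ((B u).smulRight (B v)) : LinearMap.BilinForm K V) = B ∘ₗ wedge B u v := by
  ext x y
  simp [antisymmetrize_apply, wedge, mul_comm]

theorem antisymmetrize_mem_map_sAdjDerived [FiniteDimensional K V] (hB : B.IsSymm)
    (hnd : B.Nondegenerate) (τ : LinearMap.BilinForm K V) :
    (antisymmetrize τ : LinearMap.BilinForm K V) ∈
      (sAdjDerived B).map (LinearMap.compRight K B) := by
  have hsurj : Function.Surjective B := (B.toDual hnd).surjective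
  let e := Module.finBasis K V
  have hτ : τ = ∑ i, (e.coord i).smulRight (τ (e i)) := e.ext fun j => by
    simp [Finsupp.single_apply]
  rw [hτ, map_sum, Submodule.coe_sum]
  refine Submodule.sum_mem _ fun i _ => ?_
  obtain ⟨u, hu⟩ := hsurj (e.coord i)
  obtain ⟨v, hv⟩ := hsurj (τ (e i))
  rw [← hu, ← hv, antisymmetrize_smulRight]
  exact ⟨_, wedge_mem_sAdjDerived hB hnd u v, rfl⟩

theorem map_compRight_sAdjDerived [FiniteDimensional K V] (hB : B.IsSymm)
    (hnd : B.Nondegenerate) :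
    (sAdjDerived B).map (LinearMap.compRight K B) = alternatingForms K V := by
  refine le_antisymm ?_ fun γ hγ => ?_
  · rintro _ ⟨A, hA, rfl⟩
    exact isAlt_comp_of_mem_sAdjDerived hB hA
  · obtain ⟨τ, hτ⟩ := antisymmetrize_surjective ⟨γ, hγ⟩
    simpa only [hτ] using antisymmetrize_mem_map_sAdjDerived hB hnd τ

theorem perp_eq_orthogonal (hB : B.IsSymm) (U : Submodule K V) : perp B U = B.orthogonal U :=
  Submodule.ext fun v => forall₂_congr fun w _ => by rw [hB.eq]

theorem ker_bilinPullback_comp_compRight [FiniteDimensional K V] (hB : B.IsSymm)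
    (hnd : B.Nondegenerate) (U : Submodule K V) :
    LinearMap.ker (bilinPullback U.subtype (perp B U).subtype ∘ₗ LinearMap.compRight K B) =
      stab U := by
  ext A
  have hmem (x : V) : x ∈ U ↔ ∀ w ∈ perp B U, B x w = 0 := by
    conv_lhs => rw [← LinearMap.BilinForm.orthogonal_orthogonal hnd hB.isRefl U,
      ← perp_eq_orthogonal hB U, ← perp_eq_orthogonal hB]
    rfl
  rw [LinearMap.mem_ker, LinearMap.ext_iff₂]
  exact ⟨fun hA u hu => (hmem _).2 fun w hw => hA ⟨u, hu⟩ ⟨w, hw⟩,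
    fun hA u w => (hmem _).1 (hA u u.2) w w.2⟩

theorem finrank_perp [FiniteDimensional K V] (hB : B.IsSymm) (hnd : B.Nondegenerate)
    (U : Submodule K V) : finrank K (perp B U) = finrank K V - finrank K U := by
  rw [perp_eq_orthogonal hB, LinearMap.BilinForm.finrank_orthogonal hnd]

theorem codim_sAdjDerived_inf_stab_add_choose [FiniteDimensional K V] (hB : B.IsSymm)
    (hnd : B.Nondegenerate) (U : Submodule K V) :
    finrank K (sAdjDerived B) - finrank K ↥(sAdjDerived B ⊓ stab U) +
        (finrank K ↥(U ⊓ perp B U) + 1).choose 2 =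
      finrank K U * (finrank K V - finrank K U) := by
  have hrank := finrank_map_add_finrank_inf_ker
    (V := Module.End K V) (W := U →ₗ[K] perp B U →ₗ[K] K)
    (bilinPullback U.subtype (perp B U).subtype ∘ₗ LinearMap.compRight K B) (sAdjDerived B)
  rw [ker_bilinPullback_comp_compRight hB hnd, Submodule.map_comp,
    map_compRight_sAdjDerived hB hnd] at hrank
  rw [← hrank, Nat.add_sub_cancel, finrank_map_bilinPullback_alternatingForms,
    finrank_perp hB hnd]

end SelfAdjoint

theorem statement17_general {K V : Type*} [Field K] [AddCommGroup V] [Module K V]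
    [FiniteDimensional K V]
    (B : V →ₗ[K] V →ₗ[K] K)
    (hsymm : ∀ u v : V, B u v = B v u)
    (hnd : ∀ v : V, (∀ w : V, B v w = 0) → v = 0)
    (U : Submodule K V) (hUbot : U ≠ ⊥) (hUtop : U ≠ ⊤)
    (n l r t : ℕ)
    (hn : n = finrank K V)
    (hl : l = finrank K V - finrank K ↥U)
    (hr : r = finrank K ↥(U ⊓ perp B U))
    (ht : t = finrank K ↥(sAdjDerived B)
            - finrank K ↥(sAdjDerived B ⊓ stab U)) :
    ((l = 1 ∧ r = 0) → l + t = n) ∧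
    ((l = 1 ∧ r = 1) → l + t = n - 1) ∧
    ((l = 2 ∧ n = 3 ∧ r = 1) → l + t = n) ∧
    ((l = 2 ∧ n = 5 ∧ r = 2) → l + t = n) ∧
    ((l = 2 ∧ n = 4 ∧ r = 2) → l + t = n - 1) ∧
    ((l = 3 ∧ n = 6 ∧ r = 3) → l + t = n) ∧
    (¬ ((l = 1 ∧ r = 0) ∨ (l = 1 ∧ r = 1) ∨ (l = 2 ∧ n = 3 ∧ r = 1) ∨
        (l = 2 ∧ n = 5 ∧ r = 2) ∨ (l = 2 ∧ n = 4 ∧ r = 2) ∨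
        (l = 3 ∧ n = 6 ∧ r = 3)) → n < l + t) := by
  have hB : LinearMap.BilinForm.IsSymm B := ⟨hsymm⟩
  have hBnd : LinearMap.BilinForm.Nondegenerate B :=
    hB.isRefl.nondegenerate_iff_separatingLeft.2 hnd
  have hU : 0 < finrank K U := Submodule.one_le_finrank_iff.2 hUbot
  have hUV : finrank K U < finrank K V := Submodule.finrank_lt hUtop
  have hl_pos : 0 < l := by omega
  have hn_eq : n = finrank K U + l := by omega
  have hrl : r ≤ l := by
    rw [hr, hl, ← finrank_perp hB hBnd U]
    exact Submodule.finrank_mono inf_le_right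
  have hrm : r ≤ finrank K U := hr ▸ Submodule.finrank_mono inf_le_left
  have hcodim : t + (r + 1).choose 2 = finrank K U * l := by
    rw [ht, hr, hl, codim_sAdjDerived_inf_stab_add_choose hB hBnd]
  have htriangle := succ_choose_two_mul_two r
  rcases lt_or_ge l 4 with hl4 | hl4
  · clear hl hr ht
    interval_cases l <;> interval_cases r <;> omega
  · have := lt_of_add_succ_choose_two_eq_mul hU hl4 hrl hrm hcodim
    omega

/-- Lemma 3.3(2): for a nonzero proper subspace U of V, with
G = s(V,b)⁽¹⁾, l = codim U, r = dim(U ∩ U^⊥) and t = codim of N_G(U) in G,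
l + t > n except for the listed exceptional cases (a)–(f). -/
theorem statement17 {K V : Type*} [Field K] [AddCommGroup V] [Module K V]
    [FiniteDimensional K V] [CharP K 2] [PerfectField K]
    (B : V →ₗ[K] V →ₗ[K] K)
    (hsymm : ∀ u v : V, B u v = B v u)
    (hnd : ∀ v : V, (∀ w : V, B v w = 0) → v = 0)
    (hna : ∃ v : V, B v v ≠ 0)
    (U : Submodule K V) (hUbot : U ≠ ⊥) (hUtop : U ≠ ⊤)
    (n l r t : ℕ)
    (hn : n = finrank K V)
    (hl : l = finrank K V - finrank K ↥U)
    (hr : r = finrank K ↥(U ⊓ perp B U))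
    (ht : t = finrank K ↥(sAdjDerived B)
            - finrank K ↥(sAdjDerived B ⊓ stab U)) :
    ((l = 1 ∧ r = 0) → l + t = n) ∧
    ((l = 1 ∧ r = 1) → l + t = n - 1) ∧
    ((l = 2 ∧ n = 3 ∧ r = 1) → l + t = n) ∧
    ((l = 2 ∧ n = 5 ∧ r = 2) → l + t = n) ∧
    ((l = 2 ∧ n = 4 ∧ r = 2) → l + t = n - 1) ∧
    ((l = 3 ∧ n = 6 ∧ r = 3) → l + t = n) ∧
    (¬ ((l = 1 ∧ r = 0) ∨ (l = 1 ∧ r = 1) ∨ (l = 2 ∧ n = 3 ∧ r = 1) ∨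
        (l = 2 ∧ n = 5 ∧ r = 2) ∨ (l = 2 ∧ n = 4 ∧ r = 2) ∨
        (l = 3 ∧ n = 6 ∧ r = 3)) → n < l + t) :=
  statement17_general B hsymm hnd U hUbot hUtop n l r t hn hl hr ht
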